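/- arXiv:2209.07847 — 2 statements merged into one kernel-verified Lean document; each statement's English description precedes it below -/
import Mathlib

section
/- Let I ⊂ S = K[x_1,…,x_n] be a matroidal ideal generated in degree d with supp(I) = [n]. Then all squarefree powers of I have minimum depth: for every k with 1 ≤ k ≤ ν(I), one has depth(S/I^{[k]}) = kd − 1, i.e. g_I(k) = 0. -/
open MvPolynomial

section Preamble

variable (K : Type*) [Field K] {σ : Type*} [Fintype σ] [DecidableEq σ]

/-- A (monic) monomial of the polynomial ring. -/
def IsMonomial (f : MvPolynomial σ K) : Prop :=
  ∃ d : σ →₀ ℕ, f = monomial d 1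

/-- An ideal generated by monomials. -/
def IsMonomialIdeal (I : Ideal (MvPolynomial σ K)) : Prop :=
  ∃ A : Set (MvPolynomial σ K), (∀ u ∈ A, IsMonomial K u) ∧ I = Ideal.span A

/-- The unique minimal set of monomial generators `G(I)` of a monomial ideal:
the monomials of `I` that are minimal with respect to divisibility. -/
def minGens (I : Ideal (MvPolynomial σ K)) : Set (MvPolynomial σ K) :=
  {u | IsMonomial K u ∧ u ∈ I ∧ ∀ v, IsMonomial K v → v ∈ I → v ∣ u → v = u}

/-- A squarefree monomial ideal. -/
def IsSqfreeMonomialIdeal (I : Ideal (MvPolynomial σ K)) : Prop :=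
  IsMonomialIdeal K I ∧ ∀ u ∈ minGens K I, Squarefree u

/-- The `k`-th squarefree power `I^{[k]}`: the ideal generated by the squarefree
products of `k` minimal monomial generators of `I`. -/
noncomputable def sqPow (I : Ideal (MvPolynomial σ K)) (k : ℕ) : Ideal (MvPolynomial σ K) :=
  Ideal.span {u | Squarefree u ∧ ∃ l : List (MvPolynomial σ K),
    l.length = k ∧ (∀ f ∈ l, f ∈ minGens K I) ∧ u = l.prod}

/-- `ν(I)`: the maximum length of a regular sequence of monomials in `I`. -/
noncomputable def monNu (I : Ideal (MvPolynomial σ K)) : ℕ :=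
  sSup {m | ∃ l : List (MvPolynomial σ K), l.length = m ∧
    (∀ f ∈ l, IsMonomial K f ∧ f ∈ I) ∧
    RingTheory.Sequence.IsRegular (MvPolynomial σ K) l}

/-- The minimal degree `d` of a minimal monomial generator of `I`
(so `d_k = minDeg (I^{[k]})`). -/
noncomputable def minDeg (I : Ideal (MvPolynomial σ K)) : ℕ :=
  sInf (totalDegree '' minGens K I)

/-- `depth(S/I)`: the maximum length of an `S/I`-regular sequence of elements of
the graded maximal ideal `(x_1, …, x_n)`. -/
noncomputable def qdepth (I : Ideal (MvPolynomial σ K)) : ℕ :=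
  sSup {m | ∃ l : List (MvPolynomial σ K), l.length = m ∧
    (∀ f ∈ l, f ∈ Ideal.span (Set.range (X : σ → MvPolynomial σ K))) ∧
    RingTheory.Sequence.IsRegular (MvPolynomial σ K ⧸ I) l}

/-- `I` has linear quotients with respect to the ordering `L` of its minimal
monomial generators: each successive colon ideal is generated by variables. -/
def HasLinearQuotientsOrder (I : Ideal (MvPolynomial σ K))
    (L : List (MvPolynomial σ K)) : Prop :=
  L.Nodup ∧ (∀ u, u ∈ L ↔ u ∈ minGens K I) ∧
  ∀ i : Fin L.length, 0 < (i : ℕ) →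
    ∃ A : Set σ,
      Submodule.colon (Ideal.span {u | u ∈ L.take (i : ℕ)}) (Ideal.span {L.get i})
        = Ideal.span (X '' A)

/-- A monomial ideal with linear quotients. -/
def HasLinearQuotients (I : Ideal (MvPolynomial σ K)) : Prop :=
  ∃ L, HasLinearQuotientsOrder K I L

/-- A polymatroidal ideal: a monomial ideal generated in a single degree whose
minimal generators satisfy the exchange property. -/
def IsPolymatroidal (I : Ideal (MvPolynomial σ K)) : Prop :=
  IsMonomialIdeal K I ∧
  (∃ d, ∀ u ∈ minGens K I, totalDegree u = d) ∧
  ∀ u ∈ minGens K I, ∀ v ∈ minGens K I, ∀ k : σ,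
    degreeOf k v < degreeOf k u →
    ∃ l : σ, degreeOf l u < degreeOf l v ∧
      ∃ w, u = X k * w ∧ X l * w ∈ minGens K I

/-- A matroidal ideal: a polymatroidal ideal all of whose minimal generators are
squarefree. -/
def IsMatroidal (I : Ideal (MvPolynomial σ K)) : Prop :=
  IsPolymatroidal K I ∧ ∀ u ∈ minGens K I, Squarefree u

/-- The squarefree part of a monomial ideal: the ideal generated by its squarefree
minimal generators. -/
noncomputable def sqfPart (I : Ideal (MvPolynomial σ K)) : Ideal (MvPolynomial σ K) :=
  Ideal.span {u | u ∈ minGens K I ∧ Squarefree u}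

/-- The squarefree Veronese ideal `𝔪^{[d]}`, generated by all squarefree
monomials of degree `d`. -/
noncomputable def veronese (d : ℕ) : Ideal (MvPolynomial σ K) :=
  Ideal.span {u | ∃ F : Finset σ, F.card = d ∧ u = ∏ i ∈ F, X i}

/-- A chordal graph: no induced cycle of length greater than 3. -/
def IsChordal {V : Type*} (G : SimpleGraph V) : Prop :=
  ∀ m : ℕ, 4 ≤ m → ¬ ∃ f : ZMod m → V, Function.Injective f ∧
    ∀ i j : ZMod m, G.Adj (f i) (f j) ↔ (i = j + 1 ∨ j = i + 1)

/-- A matching of `G`: a finite set of pairwise vertex-disjoint edges of `G`. -/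
def IsMatching (G : SimpleGraph σ) (M : Finset (Sym2 σ)) : Prop :=
  (↑M ⊆ G.edgeSet) ∧ (M : Set (Sym2 σ)).Pairwise fun e f => ∀ v, v ∈ e → v ∉ f

/-- A `k`-matching of `G`. -/
def IsKMatching (G : SimpleGraph σ) (M : Finset (Sym2 σ)) (k : ℕ) : Prop :=
  IsMatching G M ∧ M.card = k

/-- The vertex set `V(M)` of a matching. -/
def mVerts (M : Finset (Sym2 σ)) : Finset σ :=
  Finset.univ.filter fun v => ∃ e ∈ M, v ∈ e

/-- The squarefree monomial `∏_{v ∈ V(M)} x_v` attached to a matching. -/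
noncomputable def matchMon (M : Finset (Sym2 σ)) : MvPolynomial σ K :=
  ∏ v ∈ mVerts M, X v

/-- The edge ideal `I(G)` of a finite simple graph `G`. -/
noncomputable def edgeIdeal (G : SimpleGraph σ) : Ideal (MvPolynomial σ K) :=
  Ideal.span {u | ∃ i j, G.Adj i j ∧ u = X i * X j}

/-- The `k`-th squarefree power `I(G)^{[k]}` of the edge ideal, generated by the
monomials `∏_{v ∈ V(M)} x_v` of the `k`-matchings `M` of `G`. -/
noncomputable def matchPow (G : SimpleGraph σ) (k : ℕ) : Ideal (MvPolynomial σ K) :=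
  Ideal.span {u | ∃ M : Finset (Sym2 σ), IsKMatching G M k ∧ u = matchMon K M}

/-- The matching number `ν(G)`. -/
noncomputable def matchNum (G : SimpleGraph σ) : ℕ :=
  sSup {k | ∃ M : Finset (Sym2 σ), IsKMatching G M k}

end Preamble

/-!
The bases of the `k`-fold matroid union of the matroid of `I` are the unions of `k` disjoint bases,
as soon as such unions exist; this is what `k ≤ ν(I)` provides, because a regular sequence of
monomials has pairwise disjoint supports. Hence `I^{[k]}` is generated by the monomials whose
support spans a loopless matroid `N` of rank `k d`, and it suffices to show `depth (S ⧸ J) = r - 1`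
for the ideal `J` of spanning sets of a loopless matroid of rank `r ≥ 1`.

By Rees' theorem the depth is the first `i` with `Ext^i(S ⧸ 𝔪, S ⧸ J) ≠ 0`. Vanishing below `r - 1`
follows by splitting on one variable at a time, since every generator of `J` involves at least `r`
variables. For non-vanishing at `r - 1`, consider the ideals
`J_T = (x_e : e ∈ cl T) + (J : x_T)`. If `b ∉ cl T`, then a Mayer–Vietoris sequence embeds
`Ext^s(S ⧸ 𝔪, S ⧸ J_{T ∪ b})` into `Ext^{s+1}(S ⧸ 𝔪, S ⧸ J_T)` for `s + 2 = r - rk T`, and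
`J_T = 𝔪` once `T` has rank `r - 1`; start from `T = ∅`, where `J_T = J`.
-/

section Ext

open CategoryTheory Abelian

section ShortExact

universe w' v u

variable {𝒞 : Type u} [Category.{v} 𝒞] [Abelian 𝒞] [HasExt.{w'} 𝒞] {S : ShortComplex 𝒞}
  {N : 𝒞} {i : ℕ}

lemma subsingleton_ext_X₂ (hS : S.ShortExact) (h₁ : Subsingleton (Ext N S.X₁ i))
    (h₃ : Subsingleton (Ext N S.X₃ i)) : Subsingleton (Ext N S.X₂ i) := by
  refine subsingleton_of_forall_eq 0 fun x ↦ ?_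
  obtain ⟨y, rfl⟩ := Ext.covariant_sequence_exact₂ N hS x (Subsingleton.elim _ _)
  rw [Subsingleton.elim y 0, Ext.zero_comp]

lemma subsingleton_ext_X₃ (hS : S.ShortExact) (h₁ : Subsingleton (Ext N S.X₁ (i + 1)))
    (h₂ : Subsingleton (Ext N S.X₂ i)) : Subsingleton (Ext N S.X₃ i) := by
  refine subsingleton_of_forall_eq 0 fun x ↦ ?_
  obtain ⟨y, rfl⟩ := Ext.covariant_sequence_exact₃ N hS x rfl (Subsingleton.elim _ _)
  rw [Subsingleton.elim y 0, Ext.zero_comp]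

end ShortExact

universe u

variable {R : Type u} [CommRing R] {N : ModuleCat.{u} R} {i : ℕ}

lemma subsingleton_ext_prod {A B : Type u} [AddCommGroup A] [Module R A] [AddCommGroup B]
    [Module R B] (hA : Subsingleton (Ext N (ModuleCat.of R A) i))
    (hB : Subsingleton (Ext N (ModuleCat.of R B) i)) :
    Subsingleton (Ext N (ModuleCat.of R (A × B)) i) :=
  subsingleton_ext_X₂ (S := ModuleCat.shortComplexOfCompEqZero (LinearMap.inl R A B)
      (LinearMap.snd R A B) (LinearMap.snd_comp_inl R A B))
    (ModuleCat.shortComplex_shortExact _ Function.Exact.inl_snd LinearMap.inl_injective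
      LinearMap.snd_surjective) hA hB

lemma subsingleton_ext_of_subsingleton (A : ModuleCat.{u} R) [Subsingleton A] :
    Subsingleton (Ext N A i) := by
  refine subsingleton_of_forall_eq 0 fun x ↦ ?_
  have id_eq_zero : 𝟙 A = 0 := by
    ext a
    exact Subsingleton.elim _ _
  rw [← Ext.comp_mk₀_id x, id_eq_zero, Ext.mk₀_zero, Ext.comp_zero]

section MayerVietoris

variable (I J : Ideal R)

/-- The Mayer–Vietoris sequence `0 → R ⧸ (I ⊓ J) → R ⧸ I × R ⧸ J → R ⧸ (I ⊔ J) → 0`, whose second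
map is the difference of the two projections. -/
noncomputable abbrev mayerVietorisComplex : ShortComplex (ModuleCat.{u} R) :=
  ModuleCat.shortComplexOfCompEqZero
    (LinearMap.prod (Submodule.factor (inf_le_left : I ⊓ J ≤ I))
      (Submodule.factor (inf_le_right : I ⊓ J ≤ J)))
    (LinearMap.coprod (Submodule.factor (le_sup_left : I ≤ I ⊔ J))
      (-Submodule.factor (le_sup_right : J ≤ I ⊔ J)))
    (by ext; simp)

lemma mayerVietorisComplex_exact :
    Function.Exact (mayerVietorisComplex I J).f (mayerVietorisComplex I J).g := by
  rintro ⟨x, y⟩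
  obtain ⟨a, rfl⟩ := Submodule.Quotient.mk_surjective _ x
  obtain ⟨b, rfl⟩ := Submodule.Quotient.mk_surjective _ y
  constructor
  · intro hab
    have sub_mem : a - b ∈ I ⊔ J := by
      rw [← Submodule.Quotient.mk_eq_zero, Submodule.Quotient.mk_sub, sub_eq_add_neg]
      exact hab
    obtain ⟨c, hc, e, he, hce⟩ := Submodule.mem_sup.1 sub_mem
    refine ⟨Submodule.Quotient.mk (a - c), Prod.ext ?_ ?_⟩
    · exact (Submodule.Quotient.eq I).2 (by simpa using hc)
    · refine (Submodule.Quotient.eq J).2 ?_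
      rwa [LinearMap.id_apply, sub_right_comm, ← hce, add_sub_cancel_left]
  · rintro ⟨z, hz⟩
    rw [← hz]
    exact congr($((mayerVietorisComplex I J).zero) z)

lemma mayerVietorisComplex_shortExact : (mayerVietorisComplex I J).ShortExact := by
  refine ModuleCat.shortComplex_shortExact _ (mayerVietorisComplex_exact I J) ?_ ?_
  · refine (injective_iff_map_eq_zero (mayerVietorisComplex I J).f.hom).2 fun x hx ↦ ?_
    obtain ⟨a, rfl⟩ := Submodule.Quotient.mk_surjective _ x
    exact (Submodule.Quotient.mk_eq_zero _).2
      ⟨(Submodule.Quotient.mk_eq_zero I).1 congr(($hx).1),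
        (Submodule.Quotient.mk_eq_zero J).1 congr(($hx).2)⟩
  · intro x
    obtain ⟨a, rfl⟩ := Submodule.Quotient.mk_surjective _ x
    exact ⟨(Submodule.Quotient.mk a, 0), by simp⟩

lemma subsingleton_ext_quotient_sup (hI : Subsingleton (Ext N (ModuleCat.of R (R ⧸ I)) i))
    (hJ : Subsingleton (Ext N (ModuleCat.of R (R ⧸ J)) i))
    (hIJ : Subsingleton (Ext N (ModuleCat.of R (R ⧸ (I ⊓ J))) (i + 1))) :
    Subsingleton (Ext N (ModuleCat.of R (R ⧸ (I ⊔ J))) i) :=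
  subsingleton_ext_X₃ (mayerVietorisComplex_shortExact I J) hIJ (subsingleton_ext_prod hI hJ)

end MayerVietoris

section Colon

variable {I I' : Ideal R} {x : R}

/-- The sequence `0 → R ⧸ I' → R ⧸ I → R ⧸ (I ⊔ (x)) → 0` whose first map is multiplication by `x`;
the hypothesis says that `I'` is the colon ideal `I : x`. -/
noncomputable abbrev colonComplex (hI' : ∀ a, a ∈ I' ↔ x * a ∈ I) :
    ShortComplex (ModuleCat.{u} R) :=
  ModuleCat.shortComplexOfCompEqZero
    (Submodule.mapQ I' I (LinearMap.lsmul R R x) fun a ha ↦ (hI' a).1 ha)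
    (Submodule.factor (le_sup_left : I ≤ I ⊔ Ideal.span {x}))
    (by
      ext
      exact (Submodule.Quotient.mk_eq_zero _).2 (Ideal.mem_sup_right
        (Ideal.mul_mem_right _ _ (Ideal.mem_span_singleton_self x))))

lemma colonComplex_shortExact (hI' : ∀ a, a ∈ I' ↔ x * a ∈ I) :
    (colonComplex hI').ShortExact := by
  refine ModuleCat.shortComplex_shortExact _ (fun y ↦ ⟨fun hy ↦ ?_, ?_⟩) ?_
    (Submodule.factor_surjective le_sup_left)
  · obtain ⟨a, rfl⟩ := Submodule.Quotient.mk_surjective _ y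
    have ha : a ∈ I ⊔ Ideal.span {x} := (Submodule.Quotient.mk_eq_zero _).1 hy
    obtain ⟨c, hc, e, he, rfl⟩ := Submodule.mem_sup.1 ha
    obtain ⟨b, rfl⟩ := Ideal.mem_span_singleton.1 he
    exact ⟨Submodule.Quotient.mk b, (Submodule.Quotient.eq (x := x * b) I).2 (by simpa using hc)⟩
  · rintro ⟨z, rfl⟩
    exact congr($((colonComplex hI').zero) z)
  · refine (injective_iff_map_eq_zero (colonComplex hI').f.hom).2 fun y hy ↦ ?_
    obtain ⟨a, rfl⟩ := Submodule.Quotient.mk_surjective _ y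
    exact (Submodule.Quotient.mk_eq_zero _).2
      ((hI' a).2 ((Submodule.Quotient.mk_eq_zero (x := x * a) I).1 hy))

lemma subsingleton_ext_quotient_of_colon (hI' : ∀ a, a ∈ I' ↔ x * a ∈ I)
    (hcolon : Subsingleton (Ext N (ModuleCat.of R (R ⧸ I')) i))
    (hsup : Subsingleton (Ext N (ModuleCat.of R (R ⧸ (I ⊔ Ideal.span {x}))) i)) :
    Subsingleton (Ext N (ModuleCat.of R (R ⧸ I)) i) :=
  subsingleton_ext_X₂ (colonComplex_shortExact hI') hcolon hsup

end Colon

section Regular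

variable {I : Ideal R} {x : R}

lemma subsingleton_ext_zero_quotient_of_regular (hx : x ∈ Module.annihilator R N)
    (hI : ∀ a, a ∈ I ↔ x * a ∈ I) :
    Subsingleton (Ext N (ModuleCat.of R (R ⧸ I)) 0) := by
  have hreg : IsSMulRegular (R ⧸ I) x :=
    (ModuleCat.mono_iff_injective _).1 (colonComplex_shortExact hI).mono_f
  have := IsSMulRegular.linearMap_subsingleton_of_mem_annihilator hreg hx
  exact (Ext.addEquiv₀.trans ModuleCat.homAddEquiv).subsingleton

-- Multiplication by `x` on `R ⧸ I` induces zero on `Ext N`, so the connecting map is surjective.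
lemma subsingleton_ext_succ_quotient_of_regular (hx : x ∈ Module.annihilator R N)
    (hI : ∀ a, a ∈ I ↔ x * a ∈ I)
    (hsup : Subsingleton (Ext N (ModuleCat.of R (R ⧸ (I ⊔ Ideal.span {x}))) i)) :
    Subsingleton (Ext N (ModuleCat.of R (R ⧸ I)) (i + 1)) := by
  refine subsingleton_of_forall_eq 0 fun z ↦ ?_
  have mul_eq_zero := Ext.postcomp_smul_id_eq_zero_of_mem_annihilator
    (M := ModuleCat.of R (R ⧸ I)) hx (i + 1)
  obtain ⟨y, rfl⟩ := Ext.covariant_sequence_exact₁ N (colonComplex_shortExact hI) z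
    congr(($mul_eq_zero).hom z) rfl
  rw [Subsingleton.elim (α := Ext N (ModuleCat.of R (R ⧸ (I ⊔ Ideal.span {x}))) i) y 0,
    Ext.zero_comp]

end Regular

end Ext

section SupportIdeal

variable {σ : Type*}

/-- The link `{F | F ∪ C ∈ 𝒰}` of a set `C` in a family of sets; for squarefree monomial ideals it
corresponds to the colon ideal by the product of the variables in `C`. -/
def link (𝒰 : Set (Set σ)) (C : Set σ) : Set (Set σ) := {F | F ∪ C ∈ 𝒰}

/-- The family of the sets meeting `W`; it corresponds to the ideal generated by the variables
in `W`. -/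
def meeting (W : Set σ) : Set (Set σ) := {F | (F ∩ W).Nonempty}

lemma isUpperSet_link {𝒰 : Set (Set σ)} (h𝒰 : IsUpperSet 𝒰) (C : Set σ) :
    IsUpperSet (link 𝒰 C) :=
  fun _ _ hFG hF ↦ h𝒰 (Set.union_subset_union_left C hFG) hF

lemma isUpperSet_meeting (W : Set σ) : IsUpperSet (meeting W) :=
  fun _ _ hFG hF ↦ hF.mono (Set.inter_subset_inter_left W hFG)

lemma meeting_mono {V W : Set σ} (hVW : V ⊆ W) : meeting V ⊆ meeting W :=
  fun F hF ↦ hF.mono (Set.inter_subset_inter_right F hVW)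

lemma mem_meeting_univ {F : Set σ} : F ∈ meeting Set.univ ↔ F.Nonempty := by
  rw [meeting, Set.mem_ofPred_eq, Set.inter_univ]

lemma link_mono {𝒰 : Set (Set σ)} (h𝒰 : IsUpperSet 𝒰) {C D : Set σ} (hCD : C ⊆ D) :
    link 𝒰 C ⊆ link 𝒰 D :=
  fun F hF ↦ h𝒰 (Set.union_subset_union_right F hCD) hF

lemma link_empty (𝒰 : Set (Set σ)) : link 𝒰 ∅ = 𝒰 := by
  simp [link]

lemma link_union (𝒰 𝒱 : Set (Set σ)) (C : Set σ) : link (𝒰 ∪ 𝒱) C = link 𝒰 C ∪ link 𝒱 C :=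
  rfl

lemma link_link (𝒰 : Set (Set σ)) (C D : Set σ) : link (link 𝒰 C) D = link 𝒰 (D ∪ C) := by
  simp [link, Set.union_assoc]

lemma link_meeting {W C : Set σ} (hCW : Disjoint C W) : link (meeting W) C = meeting W := by
  ext F
  simp [link, meeting, Set.union_inter_distrib_right, hCW.inter_eq]

lemma meeting_union (V W : Set σ) : meeting (V ∪ W) = meeting V ∪ meeting W := by
  ext F
  simp [meeting, Set.inter_union_distrib_left, Set.union_nonempty]

variable (R : Type*) [CommSemiring R]

/-- The squarefree monomial ideal generated by the monomials with support in `𝒰`. For an upper set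
`𝒰` these are exactly its monomials. -/
noncomputable def supportIdeal (𝒰 : Set (Set σ)) : Ideal (MvPolynomial σ R) :=
  Ideal.span ((fun m ↦ monomial m (1 : R)) '' {m | (m.support : Set σ) ∈ 𝒰})

variable {R}

lemma mem_supportIdeal {𝒰 : Set (Set σ)} (h𝒰 : IsUpperSet 𝒰) {f : MvPolynomial σ R} :
    f ∈ supportIdeal R 𝒰 ↔ ∀ m ∈ f.support, (m.support : Set σ) ∈ 𝒰 := by
  rw [supportIdeal, mem_ideal_span_monomial_image]
  refine forall₂_congr fun m _ ↦ ⟨?_, fun hm ↦ ⟨m, hm, le_rfl⟩⟩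
  rintro ⟨s, hs, hsm⟩
  exact h𝒰 (Finset.coe_subset.2 (Finsupp.support_mono hsm)) hs

lemma supportIdeal_mono {𝒰 𝒱 : Set (Set σ)} (h : 𝒰 ⊆ 𝒱) :
    supportIdeal R 𝒰 ≤ supportIdeal R 𝒱 :=
  Ideal.span_mono (Set.image_mono fun _ hm ↦ h hm)

lemma supportIdeal_union (𝒰 𝒱 : Set (Set σ)) :
    supportIdeal R (𝒰 ∪ 𝒱) = supportIdeal R 𝒰 ⊔ supportIdeal R 𝒱 := by
  rw [supportIdeal, supportIdeal, supportIdeal, ← Ideal.span_union, ← Set.image_union]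
  rfl

lemma supportIdeal_inter {𝒰 𝒱 : Set (Set σ)} (h𝒰 : IsUpperSet 𝒰) (h𝒱 : IsUpperSet 𝒱) :
    supportIdeal R (𝒰 ∩ 𝒱) = supportIdeal R 𝒰 ⊓ supportIdeal R 𝒱 := by
  ext f
  simp only [Submodule.mem_inf, mem_supportIdeal h𝒰, mem_supportIdeal h𝒱,
    mem_supportIdeal (h𝒰.inter h𝒱), Set.mem_inter_iff, forall_and]

lemma supportIdeal_meeting (W : Set σ) :
    supportIdeal R (meeting W) = Ideal.span (X '' W) := by
  ext f
  rw [mem_supportIdeal (isUpperSet_meeting W), mem_ideal_span_X_image]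
  refine forall₂_congr fun m _ ↦ ?_
  simp [meeting, Set.Nonempty, and_comm]

lemma supportIdeal_meeting_univ :
    supportIdeal R (meeting (Set.univ : Set σ)) = idealOfVars σ R := by
  rw [supportIdeal_meeting, Set.image_univ]

lemma mem_supportIdeal_link_singleton {𝒰 : Set (Set σ)} (h𝒰 : IsUpperSet 𝒰) (x : σ)
    (f : MvPolynomial σ R) :
    f ∈ supportIdeal R (link 𝒰 {x}) ↔ X x * f ∈ supportIdeal R 𝒰 := by
  classical
  have support_single_add (m : σ →₀ ℕ) :
      ((Finsupp.single x 1 + m).support : Set σ) = (m.support : Set σ) ∪ {x} := by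
    ext y
    by_cases hy : y = x <;> simp [hy]
  simp only [mem_supportIdeal h𝒰, mem_supportIdeal (isUpperSet_link h𝒰 {x}), support_X_mul,
    Finset.mem_map, addLeftEmbedding_apply, forall_exists_index, and_imp, forall_apply_eq_imp_iff₂,
    support_single_add]
  rfl

lemma supportIdeal_eq_top {𝒰 : Set (Set σ)} (h : ∅ ∈ 𝒰) : supportIdeal R 𝒰 = ⊤ :=
  (Ideal.eq_top_iff_one _).2 (Ideal.subset_span ⟨0, by simpa using h, rfl⟩)

lemma idealOfVars_ne_top [Nontrivial R] : idealOfVars σ R ≠ ⊤ := by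
  rw [← supportIdeal_meeting_univ, Ne, Ideal.eq_top_iff_one,
    mem_supportIdeal (isUpperSet_meeting _)]
  intro h
  simpa [meeting] using h 0 (by simp)

end SupportIdeal

section Vanishing

open CategoryTheory Abelian

universe u w

variable {σ : Type w} {R : Type u} [CommRing R]

variable (σ R) in
/-- The module `S/𝔪`, where `S` is the polynomial ring and `𝔪` the ideal generated by its
variables. -/
noncomputable abbrev residueModule : ModuleCat.{max u w} (MvPolynomial σ R) :=
  ModuleCat.of (MvPolynomial σ R) (MvPolynomial σ R ⧸ idealOfVars σ R)

/-- The vanishing of `Ext^i(S/𝔪, S/J)`. -/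
abbrev ExtVanishes (J : Ideal (MvPolynomial σ R)) (i : ℕ) : Prop :=
  Subsingleton (Ext (residueModule σ R)
    (ModuleCat.of (MvPolynomial σ R) (MvPolynomial σ R ⧸ J)) i)

lemma extVanishes_top (i : ℕ) : ExtVanishes (⊤ : Ideal (MvPolynomial σ R)) i :=
  have : Subsingleton (MvPolynomial σ R ⧸ (⊤ : Ideal (MvPolynomial σ R))) :=
    Ideal.Quotient.subsingleton_iff.2 rfl
  subsingleton_ext_of_subsingleton _

lemma not_extVanishes_idealOfVars_zero [Nontrivial R] : ¬ ExtVanishes (idealOfVars σ R) 0 := by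
  intro h
  have hnontriv : Nontrivial (residueModule σ R) :=
    Ideal.Quotient.nontrivial_iff.2 idealOfVars_ne_top
  obtain ⟨a, ha⟩ := exists_ne (0 : residueModule σ R)
  have hhom : Subsingleton (residueModule σ R ⟶ residueModule σ R) :=
    Ext.addEquiv₀.symm.subsingleton
  have id_eq_zero : 𝟙 (residueModule σ R) = 0 := Subsingleton.elim _ _
  exact ha congr(($id_eq_zero).hom a)

lemma annihilator_residueModule :
    Module.annihilator (MvPolynomial σ R) (residueModule σ R) = idealOfVars σ R :=
  Ideal.annihilator_quotient

lemma X_mem_annihilator_residueModule (x : σ) :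
    X x ∈ Module.annihilator (MvPolynomial σ R) (residueModule σ R) := by
  rw [annihilator_residueModule]
  exact Ideal.subset_span ⟨x, rfl⟩

lemma lt_encard_compl_insert {x : σ} {W : Set σ} (hx : x ∉ W) {i : ℕ}
    (hi : (i + 1 : ℕ) < Wᶜ.encard) : i < (insert x W)ᶜ.encard := by
  have hcompl : (insert x W)ᶜ = Wᶜ \ {x} := by
    ext y
    simp [not_or, and_comm]
  rw [← Set.encard_sdiff_singleton_add_one (Set.mem_compl hx), Nat.cast_succ] at hi
  rw [hcompl]
  exact lt_of_add_lt_add_right hi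

lemma extVanishes_meeting {W : Set σ} {i : ℕ} (hi : i < Wᶜ.encard) :
    ExtVanishes (supportIdeal R (meeting W)) i := by
  induction i generalizing W with
  | zero =>
    obtain ⟨x, hx⟩ : Wᶜ.Nonempty := Set.encard_pos.1 hi
    refine subsingleton_ext_zero_quotient_of_regular
      (X_mem_annihilator_residueModule x) fun f ↦ ?_
    rw [← mem_supportIdeal_link_singleton (isUpperSet_meeting W),
      link_meeting (Set.disjoint_singleton_left.2 hx)]
  | succ i ih =>
    obtain ⟨x, hx⟩ : Wᶜ.Nonempty := Set.encard_pos.1 (pos_of_gt hi)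
    refine subsingleton_ext_succ_quotient_of_regular
      (X_mem_annihilator_residueModule x) (fun f ↦ ?_) ?_
    · rw [← mem_supportIdeal_link_singleton (isUpperSet_meeting W),
        link_meeting (Set.disjoint_singleton_left.2 hx)]
    · rw [← Set.image_singleton, ← supportIdeal_meeting, ← supportIdeal_union, ← meeting_union,
        Set.union_singleton]
      exact ih (lt_encard_compl_insert hx hi)

lemma meeting_union_link_of_compl_notMem {𝒰 : Set (Set σ)} (h𝒰 : IsUpperSet 𝒰) {C W : Set σ}
    (hCW : Disjoint C W) (hW : Wᶜ ∉ 𝒰) : meeting W ∪ link 𝒰 C = meeting W := by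
  refine Set.union_eq_left.2 fun F hF ↦ ?_
  by_contra hFW
  have hFW : Disjoint F W := Set.disjoint_iff_inter_eq_empty.2 (Set.not_nonempty_iff_eq_empty.1 hFW)
  exact hW (h𝒰 (Set.union_subset hFW.subset_compl_right hCW.subset_compl_right) hF)

lemma extVanishes_of_link_of_meeting {𝒰 : Set (Set σ)} (h𝒰 : IsUpperSet 𝒰) (x : σ) {i : ℕ}
    (hlink : ExtVanishes (supportIdeal R (link 𝒰 {x})) i)
    (hmeeting : ExtVanishes (supportIdeal R (meeting {x} ∪ 𝒰)) i) :
    ExtVanishes (supportIdeal R 𝒰) i := by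
  refine subsingleton_ext_quotient_of_colon (mem_supportIdeal_link_singleton h𝒰 x) hlink ?_
  rwa [sup_comm, ← Set.image_singleton, ← supportIdeal_meeting, ← supportIdeal_union]

-- Each variable outside `C ∪ W` is either inverted (joined to `C`) or killed (joined to `W`).
theorem extVanishes_meeting_union_link [Finite σ] {𝒰 : Set (Set σ)} (h𝒰 : IsUpperSet 𝒰) {i : ℕ}
    (hcard : ∀ F ∈ 𝒰, (i + 1 : ℕ) < F.encard) {C W : Set σ} (hCW : Disjoint C W)
    (hW : i < Wᶜ.encard) : ExtVanishes (supportIdeal R (meeting W ∪ link 𝒰 C)) i := by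
  induction h : C ∪ W using WellFoundedGT.induction generalizing C W with
  | ind D ih =>
  subst h
  by_cases hW𝒰 : Wᶜ ∈ 𝒰
  · by_cases hD : C ∪ W = Set.univ
    · have hC : C = Wᶜ := (IsCompl.of_eq hCW.inter_eq hD).eq_compl
      rw [supportIdeal_eq_top (Or.inr (by simpa [link, hC] using hW𝒰))]
      exact extVanishes_top i
    · obtain ⟨x, hx⟩ := (Set.ne_univ_iff_exists_notMem _).1 hD
      obtain ⟨hxC, hxW⟩ := not_or.1 hx
      have hlt : C ∪ W < {x} ∪ (C ∪ W) := Set.ssubset_insert hx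
      refine extVanishes_of_link_of_meeting
        ((isUpperSet_meeting W).union (isUpperSet_link h𝒰 C)) x ?_ ?_
      · rw [link_union, link_meeting (Set.disjoint_singleton_left.2 hxW), link_link]
        exact ih _ hlt ((Set.disjoint_singleton_left.2 hxW).union_left hCW) hW
          (Set.union_assoc ..)
      · rw [← Set.union_assoc, ← meeting_union]
        exact ih _ hlt ((Set.disjoint_singleton_right.2 hxC).union_right hCW)
          (lt_encard_compl_insert hxW (hcard _ hW𝒰)) (Set.union_left_comm ..)
  · rw [meeting_union_link_of_compl_notMem h𝒰 hCW hW𝒰]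
    exact extVanishes_meeting hW

end Vanishing

section SpanningIdeal

variable {σ : Type*} {M : Matroid σ}

/-- The family whose ideal is `(x_e : e ∈ cl T) + (I : x_T)`, where `I` is the ideal of the spanning
sets of `M`. -/
def relSpanning (M : Matroid σ) (T : Set σ) : Set (Set σ) :=
  meeting (M.closure T) ∪ link {F | M.Spanning F} T

lemma isUpperSet_spanning (hE : M.E = Set.univ) : IsUpperSet {F | M.Spanning F} :=
  fun _ F hFG hF ↦ hF.superset hFG (hE ▸ F.subset_univ)

lemma relSpanning_insert (hE : M.E = Set.univ) (b : σ) (T : Set σ) :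
    relSpanning M (insert b T) = (meeting (M.closure T) ∪ link {F | M.Spanning F} (insert b T)) ∪
      (meeting (M.closure (insert b T)) ∪ link {F | M.Spanning F} T) := by
  have hT : T ⊆ insert b T := Set.subset_insert b T
  rw [Set.union_union_union_comm,
    Set.union_eq_right.2 (meeting_mono (M.closure_subset_closure hT)),
    Set.union_eq_left.2 (link_mono (isUpperSet_spanning hE) hT), relSpanning]

-- A point of `F` in `cl (T + b) \ cl T` can replace `b` in the spanning set `F ∪ (T + b)`.
lemma spanning_union_of_mem_closure_insert (hE : M.E = Set.univ) {b x : σ} {T F : Set σ}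
    (hF : M.Spanning (F ∪ insert b T)) (hxF : x ∈ F)
    (hx : x ∈ M.closure (insert b T) \ M.closure T) : M.Spanning (F ∪ T) := by
  have hinsert : F ∪ T = F ∪ insert x T := by
    rw [Set.union_insert, Set.insert_eq_of_mem (Set.mem_union_left T hxF)]
  rw [M.spanning_iff_closure_eq (hE ▸ Set.subset_univ _)] at hF ⊢
  rw [hinsert, M.closure_union_congr_right (M.closure_insert_congr hx), hF]

lemma relSpanning_eq_inter (hE : M.E = Set.univ) (b : σ) (T : Set σ) :
    relSpanning M T = (meeting (M.closure T) ∪ link {F | M.Spanning F} (insert b T)) ∩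
      (meeting (M.closure (insert b T)) ∪ link {F | M.Spanning F} T) := by
  have hT : T ⊆ insert b T := Set.subset_insert b T
  apply Set.Subset.antisymm
  · exact Set.subset_inter (Set.union_subset_union_right _ (link_mono (isUpperSet_spanning hE) hT))
      (Set.union_subset_union_left _ (meeting_mono (M.closure_subset_closure hT)))
  · rintro F ⟨hF | hF, hF' | hF'⟩
    · exact Or.inl hF
    · exact Or.inl hF
    · obtain ⟨x, hxF, hx⟩ := hF'
      by_cases hxT : x ∈ M.closure T
      · exact Or.inl ⟨x, hxF, hxT⟩
      · exact Or.inr (spanning_union_of_mem_closure_insert hE hF hxF ⟨hx, hxT⟩)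
    · exact Or.inr hF'

lemma lt_encard_of_spanning_union [M.RankFinite] {T F : Set σ} {s : ℕ}
    (hT : M.eRk T + s + 1 = M.eRank) (hF : M.Spanning (F ∪ T)) : s < F.encard := by
  have hle : s + 1 + M.eRk T ≤ F.encard + M.eRk T :=
    calc s + 1 + M.eRk T = M.eRk (F ∪ T) := by rw [hF.eRk_eq, ← hT, add_comm, add_assoc]
      _ ≤ F.encard + M.eRk T := M.eRk_union_le_encard_add_eRk F T
  rw [ENat.add_le_add_iff_right (M.isRkFinite_set T).eRk_lt_top.ne] at hle
  exact (ENat.add_one_le_iff (ENat.natCast_ne_top s)).1 hle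

lemma lt_encard_compl_closure [M.RankFinite] (hE : M.E = Set.univ) {T : Set σ} {s : ℕ}
    (hT : M.eRk T + s + 1 = M.eRank) : s < (M.closure T)ᶜ.encard := by
  refine lt_encard_of_spanning_union (T := M.closure T) (by rwa [M.eRk_closure_eq]) ?_
  rw [Set.compl_union_self, ← hE]
  exact M.ground_spanning

lemma eRk_insert_add_of_notMem_closure (hE : M.E = Set.univ) {b : σ} {T : Set σ} {s : ℕ}
    (hT : M.eRk T + (s + 1 : ℕ) + 1 = M.eRank) (hb : b ∉ M.closure T) :
    M.eRk (insert b T) + s + 1 = M.eRank := by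
  rw [← hT, M.eRk_insert_eq_add_one ⟨hE ▸ Set.mem_univ b, hb⟩, Nat.cast_succ]
  ring

lemma relSpanning_eq_meeting_univ [M.RankFinite] (hE : M.E = Set.univ) {T : Set σ}
    (hT : M.eRk T + 1 = M.eRank) : relSpanning M T = meeting Set.univ := by
  refine Set.Subset.antisymm ?_ ?_
  · rintro F (hF | hF)
    · exact meeting_mono (Set.subset_univ _) hF
    · have hpos : 0 < F.encard := lt_encard_of_spanning_union (s := 0) (by simpa using hT) hF
      exact mem_meeting_univ.2 (Set.encard_pos.1 hpos)
  · rintro F ⟨x, hxF, -⟩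
    by_cases hxT : x ∈ M.closure T
    · exact Or.inl ⟨x, hxF, hxT⟩
    · have hspan : M.Spanning (insert x T) := by
        rw [M.spanning_iff_eRk_le (hE ▸ Set.subset_univ _),
          M.eRk_insert_eq_add_one ⟨hE ▸ Set.mem_univ x, hxT⟩, hT]
      exact Or.inr (isUpperSet_spanning hE
        (Set.insert_subset (Or.inl hxF) Set.subset_union_right) hspan)

section Ext

universe u w

variable {σ : Type w} [Finite σ] {M : Matroid σ} {R : Type u} [CommRing R]

lemma extVanishes_meeting_union_link_spanning (hE : M.E = Set.univ) {C W T : Set σ} {s : ℕ}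
    (hT : M.eRk T + (s + 1 : ℕ) + 1 = M.eRank) (hCW : Disjoint C W) (hW : s < Wᶜ.encard) :
    ExtVanishes (supportIdeal R (meeting W ∪ link {F | M.Spanning F} (C ∪ T))) s := by
  rw [← link_link]
  exact extVanishes_meeting_union_link (isUpperSet_link (isUpperSet_spanning hE) T)
    (fun F hF ↦ lt_encard_of_spanning_union hT hF) hCW hW

-- Mayer–Vietoris for the decomposition of `relSpanning_eq_inter` lowers the degree by one.
lemma extVanishes_relSpanning_insert (hE : M.E = Set.univ) {b : σ} {T : Set σ} {s : ℕ}
    (hT : M.eRk T + (s + 1 : ℕ) + 1 = M.eRank) (hb : b ∉ M.closure T)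
    (h : ExtVanishes (supportIdeal R (relSpanning M T)) (s + 1)) :
    ExtVanishes (supportIdeal R (relSpanning M (insert b T))) s := by
  have hrk := eRk_insert_add_of_notMem_closure hE hT hb
  have hupper (C D : Set σ) : IsUpperSet (meeting (M.closure C) ∪ link {F | M.Spanning F} D) :=
    (isUpperSet_meeting _).union (isUpperSet_link (isUpperSet_spanning hE) D)
  rw [relSpanning_insert hE, supportIdeal_union]
  refine subsingleton_ext_quotient_sup _ _ ?_ ?_ ?_
  · refine extVanishes_meeting_union_link_spanning hE hT (Set.disjoint_singleton_left.2 hb) ?_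
    exact lt_of_le_of_lt (by simp) (lt_encard_compl_closure hE hT)
  · have := extVanishes_meeting_union_link_spanning (R := R) hE hT (Set.empty_disjoint _)
      (lt_encard_compl_closure hE hrk)
    rwa [Set.empty_union] at this
  · rwa [← supportIdeal_inter (hupper _ _) (hupper _ _), ← relSpanning_eq_inter hE]

theorem not_extVanishes_relSpanning [Nontrivial R] (hE : M.E = Set.univ) {T : Set σ} {s : ℕ}
    (hT : M.eRk T + s + 1 = M.eRank) : ¬ ExtVanishes (supportIdeal R (relSpanning M T)) s := by
  induction s generalizing T with
  | zero =>
    rw [relSpanning_eq_meeting_univ hE (by simpa using hT), supportIdeal_meeting_univ]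
    exact not_extVanishes_idealOfVars_zero
  | succ s ih =>
    obtain ⟨b, hb⟩ : (M.closure T)ᶜ.Nonempty :=
      Set.encard_pos.1 (pos_of_gt (lt_encard_compl_closure hE hT))
    exact fun h ↦ ih (eRk_insert_add_of_notMem_closure hE hT hb)
      (extVanishes_relSpanning_insert hE hT hb h)

end Ext

end SpanningIdeal

section Depth

universe u w

variable {K : Type u} [Field K] {σ : Type w} [Finite σ]

lemma smul_top_quotient_lt_top {R : Type*} [CommRing R] {J m : Ideal R} (hJ : J ≤ m)
    (hm : m ≠ ⊤) : m • (⊤ : Submodule R (R ⧸ J)) < ⊤ := by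
  have hmap : m • (⊤ : Submodule R (R ⧸ J)) = Submodule.map J.mkQ m := by
    rw [← Submodule.range_mkQ J, LinearMap.range_eq_map, ← Submodule.map_smul'', smul_eq_mul,
      Ideal.mul_top]
  refine lt_top_iff_ne_top.2 fun htop ↦ hm ?_
  rw [← sup_eq_right.2 hJ, ← Submodule.comap_map_mkQ, ← hmap, htop, Submodule.comap_top]

theorem qdepth_eq_of_extVanishes {J : Ideal (MvPolynomial σ K)} (hJ : J ≤ idealOfVars σ K) {d : ℕ}
    (hlt : ∀ i < d, ExtVanishes J i) (hd : ¬ ExtVanishes J d) : qdepth K J = d := by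
  have hsupp : Module.support (MvPolynomial σ K) (residueModule σ K) =
      PrimeSpectrum.zeroLocus (idealOfVars σ K) := by
    rw [Module.support_eq_zeroLocus, annihilator_residueModule]
  have hsmul := smul_top_quotient_lt_top hJ idealOfVars_ne_top
  have : Module.Finite (MvPolynomial σ K)
      (ModuleCat.of (MvPolynomial σ K) (MvPolynomial σ K ⧸ J)) :=
    inferInstanceAs (Module.Finite (MvPolynomial σ K) (MvPolynomial σ K ⧸ J))
  have : Module.Finite (MvPolynomial σ K) (residueModule σ K) :=
    inferInstanceAs (Module.Finite (MvPolynomial σ K) (MvPolynomial σ K ⧸ idealOfVars σ K))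
  refine IsGreatest.csSup_eq ⟨?_, ?_⟩
  · exact ModuleCat.exists_isRegular_of_exists_subsingleton_ext (idealOfVars σ K) d
      (ModuleCat.of _ (MvPolynomial σ K ⧸ J)) hsmul (residueModule σ K) hsupp hlt
  · rintro _ ⟨l, rfl, hmem, hreg⟩
    by_contra hlen
    exact hd (ModuleCat.subsingleton_ext_of_exists_isRegular (idealOfVars σ K) (residueModule σ K)
      hsupp.subset (ModuleCat.of _ (MvPolynomial σ K ⧸ J)) hsmul l hmem hreg d (not_le.1 hlen))

theorem qdepth_supportIdeal_spanning {M : Matroid σ} [M.Loopless] (hE : M.E = Set.univ) {s : ℕ}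
    (hM : M.eRank = (s + 1 : ℕ)) : qdepth K (supportIdeal K {F | M.Spanning F}) = s := by
  have hrel : relSpanning M ∅ = {F | M.Spanning F} := by
    rw [relSpanning, ← Matroid.loops, M.loops_eq_empty, link_empty]
    simp [meeting]
  have hrk : M.eRk ∅ + s + 1 = M.eRank := by simp [hM]
  have hcard {F : Set σ} (hF : M.Spanning F) : s < F.encard :=
    lt_encard_of_spanning_union hrk (by rwa [Set.union_empty])
  refine qdepth_eq_of_extVanishes ?_ (fun i hi ↦ ?_) ?_
  · rw [← supportIdeal_meeting_univ]
    exact supportIdeal_mono fun F hF ↦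
      mem_meeting_univ.2 (Set.encard_pos.1 (pos_of_gt (hcard hF)))
  · rw [← hrel, relSpanning, ← Matroid.loops, M.loops_eq_empty]
    have hi' : (i + 1 : ℕ) ≤ (s : ℕ∞) := by exact_mod_cast hi
    refine extVanishes_meeting_union_link (isUpperSet_spanning hE)
      (fun F hF ↦ hi'.trans_lt (hcard hF)) (Set.empty_disjoint ∅) ?_
    rw [Set.compl_empty, ← hE]
    exact (by exact_mod_cast hi : (i : ℕ∞) < s).trans (hcard M.ground_spanning)
  · rw [← hrel]
    exact not_extVanishes_relSpanning hE hrk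

end Depth

section MatroidUnion

open Function

variable {σ ι : Type*}

/-- A map `c` colours `X` independently for a family of matroids if the elements of `X` of colour
`i` form an independent set of the `i`-th matroid. -/
def IsIndepColoring (M : ι → Matroid σ) (X : Set σ) (c : σ → ι) : Prop :=
  ∀ i, (M i).Indep (X ∩ c ⁻¹' {i})

variable {M : ι → Matroid σ}

lemma iUnion_inter_preimage_singleton (X : Set σ) (c : σ → ι) : ⋃ i, X ∩ c ⁻¹' {i} = X := by
  rw [← Set.inter_iUnion, ← Set.preimage_iUnion, Set.iUnion_of_singleton, Set.preimage_univ,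
    Set.inter_univ]

lemma pairwise_disjoint_inter_preimage_singleton (X : Set σ) (c : σ → ι) :
    Pairwise (Disjoint on fun i ↦ X ∩ c ⁻¹' {i}) :=
  fun _ _ hij ↦ (Disjoint.preimage c (Set.disjoint_singleton.2 hij)).mono Set.inter_subset_right
    Set.inter_subset_right

lemma encard_eq_sum_encard_inter_preimage [Fintype ι] (X : Set σ) (c : σ → ι) :
    X.encard = ∑ i, (X ∩ c ⁻¹' {i}).encard := by
  rw [← finsum_eq_sum_of_fintype,
    ← Set.encard_iUnion_of_finite (pairwise_disjoint_inter_preimage_singleton X c),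
    iUnion_inter_preimage_singleton]

lemma isIndepColoring_insert_update [DecidableEq σ] {X : Set σ} {c : σ → ι}
    (hc : IsIndepColoring M X c) {y : σ} {i : ι}
    (hy : (M i).Indep (insert y (X ∩ c ⁻¹' {i}))) :
    IsIndepColoring M (insert y X) (update c y i) := by
  intro j
  obtain rfl | hij := eq_or_ne i j
  · refine hy.subset ?_
    rintro x ⟨rfl | hx, hxj⟩
    · exact Set.mem_insert x _
    · obtain rfl | hxy := eq_or_ne x y
      · exact Set.mem_insert x _
      · exact Or.inr ⟨hx, by simpa [hxy] using hxj⟩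
  · refine (hc j).subset ?_
    rintro x ⟨hx, hxj⟩
    obtain rfl | hxy := eq_or_ne x y
    · exact absurd (by simpa using hxj) hij
    · exact ⟨hx.resolve_left hxy, by simpa [hxy] using hxj⟩

-- Some colour class of `Y` is larger than the corresponding class of `X`, which it augments.
lemma exists_isIndepColoring_insert_update [Finite ι] [DecidableEq σ] {X Y : Set σ} {c c' : σ → ι}
    (hc : IsIndepColoring M X c) (hc' : IsIndepColoring M Y c') (hXY : X.encard < Y.encard) :
    ∃ y ∈ Y, (y ∈ X → c y ≠ c' y) ∧ IsIndepColoring M (insert y X) (update c y (c' y)) := by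
  have := Fintype.ofFinite ι
  obtain ⟨i, hi⟩ : ∃ i, (X ∩ c ⁻¹' {i}).encard < (Y ∩ c' ⁻¹' {i}).encard := by
    by_contra! hle
    rw [encard_eq_sum_encard_inter_preimage X c, encard_eq_sum_encard_inter_preimage Y c'] at hXY
    exact hXY.not_ge (Finset.sum_le_sum fun i _ ↦ hle i)
  obtain ⟨y, ⟨⟨hyY, rfl⟩, hyX⟩, hy⟩ := (hc i).augment (hc' i) hi
  exact ⟨y, hyY, fun hyX' hyc ↦ hyX ⟨hyX', hyc⟩, isIndepColoring_insert_update hc hy⟩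

lemma setOf_update_ne_ssubset [DecidableEq σ] {c c' : σ → ι} {y : σ} (hy : c y ≠ c' y) :
    {x | update c y (c' y) x ≠ c' x} ⊂ {x | c x ≠ c' x} := by
  refine (Set.ssubset_iff_of_subset fun x hx ↦ ?_).2 ⟨y, hy, by simp⟩
  obtain rfl | hxy := eq_or_ne x y
  · simp at hx
  · simpa [hxy] using hx

-- If the augmenting element already lies in `X`, recolouring it brings the colourings closer.
lemma exists_isIndepColoring_insert [Finite σ] [Finite ι] {X Y : Set σ} {c c' : σ → ι}
    (hc : IsIndepColoring M X c) (hc' : IsIndepColoring M Y c') (hXY : X.encard < Y.encard) :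
    ∃ y ∈ Y, y ∉ X ∧ ∃ b, IsIndepColoring M (insert y X) b := by
  classical
  induction h : {x | c x ≠ c' x} using WellFoundedLT.induction generalizing c with
  | ind D ih =>
  subst h
  obtain ⟨y, hyY, hyc, hy⟩ := exists_isIndepColoring_insert_update hc hc' hXY
  by_cases hyX : y ∈ X
  · rw [Set.insert_eq_of_mem hyX] at hy
    exact ih _ (setOf_update_ne_ssubset (hyc hyX)) hy rfl
  · exact ⟨y, hyY, hyX, _, hy⟩

lemma encard_iUnion_of_isBase [Fintype ι] {b : ι → Set σ} (hdisj : Pairwise (Disjoint on b))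
    (hb : ∀ i, (M i).IsBase (b i)) : (⋃ i, b i).encard = ∑ i, (M i).eRank := by
  rw [Set.encard_iUnion_of_finite hdisj, finsum_eq_sum_of_fintype]
  exact Finset.sum_congr rfl fun i _ ↦ (hb i).encard_eq_eRank

lemma eq_of_sum_eq_of_le [Fintype ι] {f g : ι → ℕ∞} (hg : ∀ i, g i ≠ ⊤) (hfg : ∀ i, f i ≤ g i)
    (hsum : ∑ i, f i = ∑ i, g i) : f = g := by
  lift g to ι → ℕ using hg
  lift f to ι → ℕ using fun i ↦ ((hfg i).trans_lt (ENat.natCast_lt_top _)).ne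
  beta_reduce at hfg hsum
  have hsum' : ∑ i, f i = ∑ i, g i := by exact_mod_cast hsum
  funext i
  exact congrArg Nat.cast ((Finset.sum_eq_sum_iff_of_le fun i _ ↦ by exact_mod_cast hfg i).1 hsum' i
    (Finset.mem_univ i))

variable [Finite σ] [Nonempty ι]

section Finite

variable [Finite ι]

variable (M) in
/-- The union of a finite family of matroids on a finite set, whose independent sets are the unions
of independent sets, one from each matroid; the colouring makes these sets disjoint. -/
def matroidUnion : Matroid σ :=
  (IndepMatroid.ofFinite Set.finite_univ (fun X ↦ ∃ c, IsIndepColoring M X c)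
    ⟨fun _ ↦ Classical.arbitrary ι, fun i ↦ by simp⟩
    (fun _ _ ⟨c, hc⟩ hIJ ↦ ⟨c, fun i ↦ (hc i).subset (Set.inter_subset_inter_left _ hIJ)⟩)
    (fun I J ⟨_, hc⟩ ⟨_, hc'⟩ hIJ ↦ exists_isIndepColoring_insert hc hc' (by
      rwa [← I.toFinite.cast_ncard_eq, ← J.toFinite.cast_ncard_eq, Nat.cast_lt]))
    (fun I _ ↦ I.subset_univ)).matroid

lemma matroidUnion_ground : (matroidUnion M).E = Set.univ := rfl

lemma matroidUnion_indep_iff {X : Set σ} :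
    (matroidUnion M).Indep X ↔ ∃ c, IsIndepColoring M X c := Iff.rfl

lemma matroidUnion_indep_iUnion {A : ι → Set σ} (hA : ∀ i, (M i).Indep (A i)) :
    (matroidUnion M).Indep (⋃ i, A i) := by
  choose! c hc using fun x (hx : x ∈ ⋃ i, A i) ↦ Set.mem_iUnion.1 hx
  refine matroidUnion_indep_iff.2 ⟨c, fun i ↦ (hA i).subset ?_⟩
  rintro x ⟨hx, rfl⟩
  exact hc x hx

lemma loopless_matroidUnion {i : ι} [(M i).Loopless] (hE : (M i).E = Set.univ) :
    (matroidUnion M).Loopless := by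
  refine Matroid.loopless_iff_forall_isNonloop.2 fun x _ ↦ Matroid.indep_singleton.1 ?_
  refine matroidUnion_indep_iff.2 ⟨fun _ ↦ i, fun j ↦ ?_⟩
  obtain rfl | hij := eq_or_ne i j
  · exact (Matroid.indep_singleton.2 (Matroid.isNonloop_of_loopless (hE ▸ Set.mem_univ x))).subset
      Set.inter_subset_left
  · simp [hij]

end Finite

lemma eRank_matroidUnion_le [Fintype ι] : (matroidUnion M).eRank ≤ ∑ i, (M i).eRank := by
  obtain ⟨B, hB⟩ := (matroidUnion M).exists_isBase
  obtain ⟨c, hc⟩ := matroidUnion_indep_iff.1 hB.indep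
  rw [← hB.encard_eq_eRank, encard_eq_sum_encard_inter_preimage B c]
  exact Finset.sum_le_sum fun i _ ↦ (hc i).encard_le_eRank

lemma matroidUnion_isBase_iUnion [Finite ι] {b : ι → Set σ} (hdisj : Pairwise (Disjoint on b))
    (hb : ∀ i, (M i).IsBase (b i)) : (matroidUnion M).IsBase (⋃ i, b i) := by
  have := Fintype.ofFinite ι
  have hind := matroidUnion_indep_iUnion fun i ↦ (hb i).indep
  refine hind.isBase_of_eRk_ge (Set.toFinite _) ?_
  rw [hind.eRk_eq_encard, encard_iUnion_of_isBase hdisj hb]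
  exact eRank_matroidUnion_le

lemma eRank_matroidUnion [Fintype ι] {b : ι → Set σ} (hdisj : Pairwise (Disjoint on b))
    (hb : ∀ i, (M i).IsBase (b i)) : (matroidUnion M).eRank = ∑ i, (M i).eRank := by
  rw [← (matroidUnion_isBase_iUnion hdisj hb).encard_eq_eRank, encard_iUnion_of_isBase hdisj hb]

lemma exists_disjoint_isBase_of_matroidUnion_isBase [Fintype ι]
    (hrank : (matroidUnion M).eRank = ∑ i, (M i).eRank) {B : Set σ}
    (hB : (matroidUnion M).IsBase B) :
    ∃ b : ι → Set σ, Pairwise (Disjoint on b) ∧ (∀ i, (M i).IsBase (b i)) ∧ ⋃ i, b i = B := by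
  obtain ⟨c, hc⟩ := matroidUnion_indep_iff.1 hB.indep
  have heq : (fun i ↦ (B ∩ c ⁻¹' {i}).encard) = fun i ↦ (M i).eRank := by
    refine eq_of_sum_eq_of_le (fun i ↦ (M i).eRank_ne_top_iff.2 inferInstance)
      (fun i ↦ (hc i).encard_le_eRank) ?_
    rw [← encard_eq_sum_encard_inter_preimage, hB.encard_eq_eRank, hrank]
  refine ⟨fun i ↦ B ∩ c ⁻¹' {i}, pairwise_disjoint_inter_preimage_singleton B c, fun i ↦ ?_,
    iUnion_inter_preimage_singleton B c⟩
  exact (hc i).isBase_of_eRk_ge (Set.toFinite _) ((hc i).eRk_eq_encard.trans congr($heq i)).ge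

end MatroidUnion

section Generators

variable {K σ : Type*} [Field K] {I : Ideal (MvPolynomial σ K)}

lemma squarefree_monomial_iff {m : σ →₀ ℕ} : Squarefree (monomial m (1 : K)) ↔ ∀ x, m x ≤ 1 := by
  constructor
  · intro hm x
    by_contra! hx
    have hdvd : X x * X x ∣ monomial m (1 : K) := by
      rw [X, monomial_mul, one_mul, ← Finsupp.single_add, monomial_one_dvd_monomial_one,
        Finsupp.single_le_iff]
      exact hx
    exact X_prime.not_isUnit (hm _ hdvd)
  · intro hm p hp
    obtain ⟨a, r, -, hr, rfl⟩ :=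
      (dvd_monomial_iff_exists one_ne_zero).1 (dvd_of_mul_left_dvd hp)
    rw [monomial_mul, monomial_dvd_monomial] at hp
    have ha : a = 0 := by
      ext x
      have hle : a x + a x ≤ m x := hp.1.resolve_left one_ne_zero x
      have := hm x
      rw [Finsupp.coe_zero, Pi.zero_apply]
      lia
    rw [ha]
    exact (isUnit_of_dvd_one hr).map C

lemma monomial_mem_minGens_iff {m : σ →₀ ℕ} :
    monomial m (1 : K) ∈ minGens K I ↔ Minimal (fun a ↦ monomial a (1 : K) ∈ I) m := by
  constructor
  · rintro ⟨-, hmI, hmin⟩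
    refine ⟨hmI, fun a haI ham ↦ ?_⟩
    have heq := hmin _ ⟨a, rfl⟩ haI (monomial_one_dvd_monomial_one.2 ham)
    exact (monomial_left_injective one_ne_zero heq).ge
  · rintro ⟨hmI, hmin⟩
    refine ⟨⟨m, rfl⟩, hmI, ?_⟩
    rintro _ ⟨a, rfl⟩ haI ham
    have ham := monomial_one_dvd_monomial_one.1 ham
    rw [ham.antisymm (hmin haI ham)]

lemma exists_le_monomial_mem_minGens {m : σ →₀ ℕ} (hm : monomial m (1 : K) ∈ I) :
    ∃ a ≤ m, monomial a (1 : K) ∈ minGens K I := by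
  obtain ⟨a, ham, ha⟩ :=
    exists_minimal_le_of_wellFoundedLT (fun a ↦ monomial a (1 : K) ∈ I) m hm
  exact ⟨a, ham, monomial_mem_minGens_iff.2 ha⟩

variable (K I) in
/-- The supports of the minimal monomial generators of `I`. -/
def genSupports : Set (Set σ) :=
  {B | ∃ m : σ →₀ ℕ, monomial m (1 : K) ∈ minGens K I ∧ m.support = B}

lemma encard_of_mem_genSupports {d : ℕ} (hsq : ∀ u ∈ minGens K I, Squarefree u)
    (hdeg : ∀ u ∈ minGens K I, totalDegree u = d) {B : Set σ} (hB : B ∈ genSupports K I) :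
    B.encard = d := by
  obtain ⟨m, hm, rfl⟩ := hB
  have hm_one {x : σ} (hx : x ∈ m.support) : m x = 1 :=
    le_antisymm (squarefree_monomial_iff.1 (hsq _ hm) x)
      (Nat.one_le_iff_ne_zero.2 (Finsupp.mem_support_iff.1 hx))
  rw [Set.encard_coe_eq_coe_finsetCard, ← hdeg _ hm, totalDegree_monomial _ one_ne_zero,
    Finsupp.sum, Finset.sum_congr rfl fun _ ↦ hm_one, Finset.card_eq_sum_ones]

lemma exists_mem_genSupports (hsupp : ∀ x, ∃ u ∈ minGens K I, X x ∣ u) (x : σ) :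
    ∃ B ∈ genSupports K I, x ∈ B := by
  obtain ⟨u, hu, hxu⟩ := hsupp x
  obtain ⟨m, rfl⟩ := hu.1
  have hx : m x ≠ 0 := (X_dvd_monomial.1 hxu).resolve_left one_ne_zero
  exact ⟨m.support, ⟨m, hu, rfl⟩, Finsupp.mem_support_iff.2 hx⟩

lemma one_le_degree_of_nonempty [Nonempty σ] {d : ℕ}
    (hsq : ∀ u ∈ minGens K I, Squarefree u) (hdeg : ∀ u ∈ minGens K I, totalDegree u = d)
    (hsupp : ∀ x, ∃ u ∈ minGens K I, X x ∣ u) :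
    1 ≤ d := by
  obtain ⟨B, hB, hxB⟩ := exists_mem_genSupports hsupp (Classical.arbitrary σ)
  have hpos := Set.encard_pos.2 ⟨_, hxB⟩
  rw [encard_of_mem_genSupports hsq hdeg hB] at hpos
  exact_mod_cast hpos

lemma exchangeProperty_genSupports (hI : IsMatroidal K I) :
    Matroid.ExchangeProperty (· ∈ genSupports K I) := by
  classical
  rintro _ _ ⟨a, ha, rfl⟩ ⟨b, hb, rfl⟩ x ⟨hxa, hxb⟩
  have ha_le := squarefree_monomial_iff.1 (hI.2 _ ha)
  have hb_le := squarefree_monomial_iff.1 (hI.2 _ hb)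
  have hax : a x = 1 := le_antisymm (ha_le x) (Nat.one_le_iff_ne_zero.2 (by simpa using hxa))
  have hbx : b x = 0 := by simpa using hxb
  obtain ⟨y, hy, w, hw, hyw⟩ := hI.1.2.2 _ ha _ hb x
    (by simp [degreeOf_monomial_eq, hax, hbx])
  rw [degreeOf_monomial_eq _ _ one_ne_zero, degreeOf_monomial_eq _ _ one_ne_zero] at hy
  have hya : a y = 0 := by have := hb_le y; lia
  have hw_eq : w = monomial (a - Finsupp.single x 1) 1 := by
    refine mul_left_cancel₀ (X_ne_zero x) ?_
    rw [← hw, X, monomial_mul, one_mul, add_tsub_cancel_of_le (Finsupp.single_le_iff.2 hax.ge)]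
  rw [hw_eq, X, monomial_mul, one_mul] at hyw
  refine ⟨y, ⟨by simpa using (pos_of_gt hy).ne', by simpa using hya⟩, _, hyw, ?_⟩
  ext z
  obtain rfl | hzy := eq_or_ne z y
  · simp
  · obtain rfl | hzx := eq_or_ne z x <;> simp [*]

/-- The matroid of a matroidal ideal, whose bases are the supports of the minimal generators. -/
def generatorMatroid [Finite σ] (hI : IsMatroidal K I) (hne : (genSupports K I).Nonempty) :
    Matroid σ :=
  Matroid.ofIsBaseOfFinite Set.finite_univ (· ∈ genSupports K I) hne
    (exchangeProperty_genSupports hI) fun B _ ↦ B.subset_univ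

section GeneratorMatroid

variable [Finite σ] (hI : IsMatroidal K I) (hne : (genSupports K I).Nonempty)

lemma generatorMatroid_ground : (generatorMatroid hI hne).E = Set.univ := rfl

lemma generatorMatroid_isBase_iff {B : Set σ} :
    (generatorMatroid hI hne).IsBase B ↔ B ∈ genSupports K I := Iff.rfl

lemma loopless_generatorMatroid (hsupp : ∀ x, ∃ u ∈ minGens K I, X x ∣ u) :
    (generatorMatroid hI hne).Loopless := by
  refine Matroid.loopless_iff_forall_isNonloop.2 fun x _ ↦ ?_
  obtain ⟨B, hB, hxB⟩ := exists_mem_genSupports hsupp x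
  exact ((generatorMatroid_isBase_iff hI hne).2 hB).indep.isNonloop_of_mem hxB

lemma eRank_generatorMatroid {d : ℕ} (hdeg : ∀ u ∈ minGens K I, totalDegree u = d) :
    (generatorMatroid hI hne).eRank = d := by
  obtain ⟨B, hB⟩ := (generatorMatroid hI hne).exists_isBase
  rw [← hB.encard_eq_eRank, encard_of_mem_genSupports hI.2 hdeg hB]

end GeneratorMatroid

end Generators

section SqPow

open Function

variable {K σ : Type*} [Field K] {I : Ideal (MvPolynomial σ K)} {k : ℕ}

variable (K I k) in
/-- The exponents of the generators of `I^{[k]}`: the 0-1 vectors which are sums of the exponents of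
`k` minimal generators of `I`. -/
def sqPowExponents : Set (σ →₀ ℕ) :=
  {s | (∀ x, s x ≤ 1) ∧ ∃ m : Fin k → σ →₀ ℕ,
    (∀ i, monomial (m i) (1 : K) ∈ minGens K I) ∧ ∑ i, m i = s}

lemma sqPow_eq_span_sqPowExponents :
    sqPow K I k = Ideal.span ((fun s ↦ monomial s (1 : K)) '' sqPowExponents K I k) := by
  refine congrArg Ideal.span (Set.Subset.antisymm ?_ ?_)
  · rintro _ ⟨hsq, l, rfl, hl, rfl⟩
    choose m hm using fun i : Fin l.length ↦ (hl _ (l.get_mem i)).1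
    have hprod : l.prod = monomial (∑ i, m i) 1 := by
      rw [monomial_sum_one, ← List.prod_ofFn, ← funext hm, List.ofFn_get]
    rw [hprod, squarefree_monomial_iff] at hsq
    exact ⟨_, ⟨hsq, m, fun i ↦ hm i ▸ hl _ (l.get_mem i), rfl⟩, hprod.symm⟩
  · rintro _ ⟨_, ⟨hsq, m, hm, rfl⟩, rfl⟩
    refine ⟨squarefree_monomial_iff.2 hsq, List.ofFn fun i ↦ monomial (m i) 1, List.length_ofFn,
      List.forall_mem_ofFn_iff.2 hm, ?_⟩
    exact (monomial_sum_one _ _).trans List.prod_ofFn.symm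

lemma coe_support_sum {ι : Type*} [Fintype ι] (m : ι → σ →₀ ℕ) :
    ((∑ i, m i).support : Set σ) = ⋃ i, ((m i).support : Set σ) := by
  ext x
  simp [Finsupp.finsetSum_apply]

lemma pairwise_disjoint_support_of_sum_le_one {ι : Type*} [Fintype ι] {m : ι → σ →₀ ℕ}
    (hm : ∀ x, (∑ i, m i) x ≤ 1) :
    Pairwise (Disjoint on fun i ↦ ((m i).support : Set σ)) := by
  classical
  refine fun i j hij ↦ Set.disjoint_left.2 fun x hi hj ↦ ?_
  have hpair : m i x + m j x ≤ ∑ i, m i x := by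
    rw [← Finset.sum_pair (f := fun i ↦ m i x) hij]
    exact Finset.sum_le_sum_of_subset (Finset.subset_univ _)
  have hx := hm x
  rw [Finsupp.finsetSum_apply] at hx
  rw [Finset.mem_coe, Finsupp.mem_support_iff] at hi hj
  lia

lemma sum_le_one_of_pairwise_disjoint_support {ι : Type*} [Fintype ι] {m : ι → σ →₀ ℕ}
    (hm : ∀ i x, m i x ≤ 1) (hdisj : Pairwise (Disjoint on fun i ↦ ((m i).support : Set σ)))
    (x : σ) : (∑ i, m i) x ≤ 1 := by
  rw [Finsupp.finsetSum_apply]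
  by_cases hx : ∃ i, m i x ≠ 0
  · obtain ⟨i, hi⟩ := hx
    rw [Finset.sum_eq_single i (fun j _ hji ↦ ?_) (by simp)]
    · exact hm i x
    · by_contra hj
      exact Set.disjoint_left.1 (hdisj hji) (Finsupp.mem_support_iff.2 hj)
        (Finsupp.mem_support_iff.2 hi)
  · push Not at hx
    simp [hx]

lemma image_support_sqPowExponents (hsq : ∀ u ∈ minGens K I, Squarefree u) :
    (fun s : σ →₀ ℕ ↦ (s.support : Set σ)) '' sqPowExponents K I k =
      {B | ∃ b : Fin k → Set σ, Pairwise (Disjoint on b) ∧ (∀ i, b i ∈ genSupports K I) ∧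
        ⋃ i, b i = B} := by
  ext B
  constructor
  · rintro ⟨_, ⟨hle, m, hm, rfl⟩, rfl⟩
    exact ⟨_, pairwise_disjoint_support_of_sum_le_one hle, fun i ↦ ⟨m i, hm i, rfl⟩,
      (coe_support_sum m).symm⟩
  · rintro ⟨b, hdisj, hb, rfl⟩
    choose m hm hmb using hb
    obtain rfl : (fun i ↦ ((m i).support : Set σ)) = b := funext hmb
    exact ⟨_, ⟨sum_le_one_of_pairwise_disjoint_support
      (fun i ↦ squarefree_monomial_iff.1 (hsq _ (hm i))) hdisj, m, hm, rfl⟩, coe_support_sum m⟩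

lemma le_of_le_one_of_support_subset {s m : σ →₀ ℕ} (hs : ∀ x, s x ≤ 1)
    (hsm : s.support ⊆ m.support) : s ≤ m := by
  intro x
  by_cases hx : s x = 0
  · simp [hx]
  · exact (hs x).trans (Nat.one_le_iff_ne_zero.2
      (Finsupp.mem_support_iff.1 (hsm (Finsupp.mem_support_iff.2 hx))))

lemma sqPow_eq_supportIdeal_spanning {N : Matroid σ}
    (hN : ∀ B, N.IsBase B ↔
      B ∈ (fun s : σ →₀ ℕ ↦ (s.support : Set σ)) '' sqPowExponents K I k) :
    sqPow K I k = supportIdeal K {F | N.Spanning F} := by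
  rw [sqPow_eq_span_sqPowExponents]
  apply le_antisymm
  · refine Ideal.span_mono (Set.image_mono fun s hs ↦ ?_)
    exact ((hN _).2 ⟨s, hs, rfl⟩).spanning
  · refine Ideal.span_le.2 ?_
    rintro _ ⟨m, hm, rfl⟩
    obtain ⟨B, hB, hBm⟩ := Matroid.Spanning.exists_isBase_subset hm
    obtain ⟨s, hs, rfl⟩ := (hN B).1 hB
    exact Ideal.mem_of_dvd _ (monomial_one_dvd_monomial_one.2
      (le_of_le_one_of_support_subset hs.1 (Finset.coe_subset.1 hBm)))
      (Ideal.subset_span ⟨s, hs, rfl⟩)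

end SqPow

section RegularSequences

open Function RingTheory.Sequence

variable {K σ : Type*} [Field K]

-- `hreg` says that the monomial with exponent `a j` is a nonzerodivisor modulo the earlier ones.
-- If `x` lay in the supports of `a i` and `a j` with `i < j`, then `a i - single x 1` would
-- dominate `a t` for some `t < j`, so the supports of `a t` and `a i` would meet as well.
lemma pairwise_disjoint_support_of_exists_le {ι : Type*} [LinearOrder ι] [WellFoundedLT ι]
    {a : ι → σ →₀ ℕ} (ha : ∀ i, a i ≠ 0)
    (hreg : ∀ j m, (∃ t < j, a t ≤ a j + m) → ∃ t < j, a t ≤ m) :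
    Pairwise (Disjoint on fun i ↦ (a i).support) := by
  classical
  have not_le_of_disjoint {s t : ι} (hst : Disjoint (a s).support (a t).support) : ¬ a s ≤ a t :=
    fun hle ↦ ha s (Finsupp.support_eq_empty.1 (hst.eq_bot_of_le (Finsupp.support_mono hle)))
  suffices hlt : ∀ j, ∀ i < j, Disjoint (a i).support (a j).support from
    (pairwise_disjoint_on _).2 fun i j hij ↦ hlt j i hij
  intro j
  induction j using WellFoundedLT.induction with
  | ind j ih =>
    refine fun i hij ↦ Finset.disjoint_left.2 fun x hxi hxj ↦ ?_
    rw [Finsupp.mem_support_iff, ← Nat.one_le_iff_ne_zero, ← Finsupp.single_le_iff] at hxi hxj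
    obtain ⟨t, htj, ht⟩ := hreg j (a i - Finsupp.single x 1)
      ⟨i, hij, tsub_le_iff_left.1 (tsub_le_tsub_left hxj _)⟩
    have hti : a t ≤ a i := ht.trans tsub_le_self
    obtain hlt | rfl | hgt := lt_trichotomy t i
    · exact not_le_of_disjoint (ih i hij t hlt) hti
    · have hx := ht x
      rw [Finsupp.single_le_iff] at hxi
      rw [Finsupp.tsub_apply, Finsupp.single_eq_same] at hx
      lia
    · exact not_le_of_disjoint (ih t htj i hgt).symm hti

variable {l : List (MvPolynomial σ K)} {a : Fin l.length → σ →₀ ℕ}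

lemma monomial_mem_ofList_take_iff (ha : ∀ i, l[i] = monomial (a i) 1) {j : ℕ} {m : σ →₀ ℕ} :
    monomial m (1 : K) ∈ Ideal.ofList (l.take j) ↔ ∃ t : Fin l.length, t < j ∧ a t ≤ m := by
  classical
  have hset : {r | r ∈ l.take j} = (fun s ↦ monomial s (1 : K)) '' (a '' {t | t < j}) := by
    ext r
    simp only [Set.mem_ofPred_eq, Set.mem_image, exists_exists_and_eq_and,
      List.mem_take_iff_getElem, lt_min_iff]
    constructor
    · rintro ⟨i, hi, rfl⟩
      exact ⟨⟨i, hi.2⟩, hi.1, (ha ⟨i, hi.2⟩).symm⟩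
    · rintro ⟨t, ht, rfl⟩
      exact ⟨t, ⟨ht, t.2⟩, ha t⟩
  rw [Ideal.ofList, hset, mem_ideal_span_monomial_image]
  simp [support_monomial]

lemma ne_zero_of_isRegular_monomial (ha : ∀ i, l[i] = monomial (a i) 1)
    (hl : IsRegular (MvPolynomial σ K) l) (i : Fin l.length) : a i ≠ 0 := by
  intro hi
  have hone : (1 : MvPolynomial σ K) ∈ Ideal.ofList (l.take l.length) :=
    (monomial_mem_ofList_take_iff ha).2 ⟨i, i.2, hi.le⟩
  rw [List.take_length, ← Ideal.eq_top_iff_one] at hone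
  exact hl.top_ne_smul (by rw [hone, Submodule.top_smul])

lemma pairwise_disjoint_support_of_isRegular_monomial (ha : ∀ i, l[i] = monomial (a i) 1)
    (hl : IsRegular (MvPolynomial σ K) l) :
    Pairwise (Disjoint on fun i ↦ (a i).support) := by
  refine pairwise_disjoint_support_of_exists_le (ne_zero_of_isRegular_monomial ha hl)
    fun j m hjm ↦ ?_
  have hreg := (isWeaklyRegular_iff_Fin _ _).1 hl.toIsWeaklyRegular j
  rw [isSMulRegular_quotient_iff_mem_of_smul_mem, smul_eq_mul, Ideal.mul_top] at hreg
  refine (monomial_mem_ofList_take_iff ha).1 (hreg _ ?_)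
  rw [ha, smul_eq_mul, monomial_mul, mul_one]
  exact (monomial_mem_ofList_take_iff ha).2 hjm

lemma exists_isRegular_of_le_monNu {I : Ideal (MvPolynomial σ K)} {k : ℕ} (hk : 1 ≤ k)
    (hnu : k ≤ monNu K I) :
    ∃ l : List (MvPolynomial σ K), k ≤ l.length ∧ (∀ f ∈ l, IsMonomial K f ∧ f ∈ I) ∧
      IsRegular (MvPolynomial σ K) l := by
  have hlt : k - 1 < monNu K I := by lia
  obtain ⟨_, ⟨l, rfl, hl, hreg⟩, hkl⟩ := exists_lt_of_lt_csSup' hlt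
  exact ⟨l, Nat.le_of_pred_lt hkl, hl, hreg⟩

lemma exists_disjoint_monomials_of_le_monNu {I : Ideal (MvPolynomial σ K)} {k : ℕ} (hk : 1 ≤ k)
    (hnu : k ≤ monNu K I) :
    ∃ a : Fin k → σ →₀ ℕ, (∀ i, monomial (a i) (1 : K) ∈ I) ∧ (∀ i, a i ≠ 0) ∧
      Pairwise (Disjoint on fun i ↦ (a i).support) := by
  obtain ⟨l, hkl, hl, hreg⟩ := exists_isRegular_of_le_monNu hk hnu
  choose a ha using fun i : Fin l.length ↦ (hl _ (l.get_mem i)).1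
  refine ⟨fun i ↦ a (i.castLE hkl), fun i ↦ ha (i.castLE hkl) ▸ (hl _ (l.get_mem _)).2,
    fun i ↦ ne_zero_of_isRegular_monomial ha hreg _, ?_⟩
  exact (pairwise_disjoint_support_of_isRegular_monomial ha hreg).comp_of_injective
    (Fin.castLE_injective hkl)

lemma nonempty_of_one_le_monNu {I : Ideal (MvPolynomial σ K)} (hnu : 1 ≤ monNu K I) :
    Nonempty σ := by
  obtain ⟨a, -, ha, -⟩ := exists_disjoint_monomials_of_le_monNu le_rfl hnu
  obtain ⟨x, -⟩ := Finsupp.ne_iff.1 (ha 0)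
  exact ⟨x⟩

lemma exists_disjoint_genSupports_of_le_monNu {I : Ideal (MvPolynomial σ K)} {k : ℕ} (hk : 1 ≤ k)
    (hnu : k ≤ monNu K I) :
    ∃ b : Fin k → Set σ, Pairwise (Disjoint on b) ∧ ∀ i, b i ∈ genSupports K I := by
  obtain ⟨a, haI, -, hdisj⟩ := exists_disjoint_monomials_of_le_monNu hk hnu
  choose m hma hm using fun i ↦ exists_le_monomial_mem_minGens (haI i)
  refine ⟨fun i ↦ (m i).support, fun i j hij ↦ ?_, fun i ↦ ⟨m i, hm i, rfl⟩⟩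
  exact Finset.disjoint_coe.2
    ((hdisj hij).mono (Finsupp.support_mono (hma i)) (Finsupp.support_mono (hma j)))

end RegularSequences

section Matroidal

variable {K σ : Type*} [Field K] [Finite σ] {I : Ideal (MvPolynomial σ K)} {d k : ℕ}

lemma matroidUnion_generatorMatroid_isBase_iff [NeZero k] (hI : IsMatroidal K I)
    (hne : (genSupports K I).Nonempty)
    (hrank : (matroidUnion fun _ : Fin k ↦ generatorMatroid hI hne).eRank =
      ∑ _ : Fin k, (generatorMatroid hI hne).eRank) {B : Set σ} :
    (matroidUnion fun _ : Fin k ↦ generatorMatroid hI hne).IsBase B ↔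
      B ∈ (fun s : σ →₀ ℕ ↦ (s.support : Set σ)) '' sqPowExponents K I k := by
  rw [image_support_sqPowExponents hI.2]
  refine ⟨exists_disjoint_isBase_of_matroidUnion_isBase hrank, ?_⟩
  rintro ⟨b, hdisj, hb, rfl⟩
  exact matroidUnion_isBase_iUnion hdisj hb

theorem sqPow_matroidal_min_depth_general (hI : IsMatroidal K I)
    (hdeg : ∀ u ∈ minGens K I, totalDegree u = d) (hsupp : ∀ x, ∃ u ∈ minGens K I, X x ∣ u)
    (hk : 1 ≤ k) (hnu : k ≤ monNu K I) : qdepth K (sqPow K I k) = k * d - 1 := by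
  have : NeZero k := ⟨by lia⟩
  have : Nonempty σ := nonempty_of_one_le_monNu (hk.trans hnu)
  obtain ⟨b, hdisj, hb⟩ := exists_disjoint_genSupports_of_le_monNu hk hnu
  have hne : (genSupports K I).Nonempty := ⟨b 0, hb 0⟩
  have := loopless_generatorMatroid hI hne hsupp
  set N := matroidUnion fun _ : Fin k ↦ generatorMatroid hI hne
  have : N.Loopless := loopless_matroidUnion (i := 0) (generatorMatroid_ground hI hne)
  have hrank : N.eRank = ∑ _ : Fin k, (generatorMatroid hI hne).eRank :=
    eRank_matroidUnion hdisj hb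
  have hkd : 1 ≤ k * d := one_le_mul hk (one_le_degree_of_nonempty hI.2 hdeg hsupp)
  rw [sqPow_eq_supportIdeal_spanning fun _ ↦
    matroidUnion_generatorMatroid_isBase_iff hI hne hrank]
  refine qdepth_supportIdeal_spanning matroidUnion_ground ?_
  rw [hrank, eRank_generatorMatroid hI hne hdeg, Nat.sub_add_cancel hkd]
  simp

end Matroidal

/-- Let `I ⊂ S = K[x_1,…,x_n]` be a matroidal ideal generated in
degree `d` with `supp(I) = [n]`. Then all squarefree powers of `I` have minimum
depth: `depth(S/I^{[k]}) = kd − 1` for `1 ≤ k ≤ ν(I)`. -/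
theorem sqPow_matroidal_min_depth {K : Type*} [Field K] {n : ℕ}
    (I : Ideal (MvPolynomial (Fin n) K)) (d : ℕ)
    (hmat : IsMatroidal K I)
    (hne : (minGens K I).Nonempty)
    (hdeg : ∀ u ∈ minGens K I, totalDegree u = d)
    (hsupp : ∀ i : Fin n, ∃ u ∈ minGens K I, X i ∣ u) :
    ∀ k : ℕ, 1 ≤ k → k ≤ monNu K I → qdepth K (sqPow K I k) = k * d - 1 := by
  exact fun _ ↦ sqPow_matroidal_min_depth_general hmat hdeg hsupp
end

section
/- Let G be a finite simple graph with no isolated vertices and ν(G) ≥ 2. Suppose G is not a complete bipartite graph and the complement G^c is disconnected, and let 2 ≤ k ≤ ν(G). Then there exist two induced subgraphs G_1 and G_2 of G on disjoint vertex sets, a (k−1)-matching M of G, and a vertex v of G such that: (1) V(G_1) ∪ V(G_2) = V(G); (2) {x_1, x_2} is an edge of G for every x_1 ∈ V(G_1) and x_2 ∈ V(G_2); (3) v ∉ e for every e ∈ M; (4) M ∩ E(G_1) ≠ ∅; and (5) v ∈ V(G_2). -/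
open MvPolynomial

/-!
A component of the disconnected graph `Gᶜ` and its complement split the vertices into `A` and `Aᶜ`
with all edges between them present. As `G` is not complete bipartite, one of the two sides, say
`A`, spans an edge `e`. Let `N` be a `k`-matching. If some edge of `N` lies inside `A`, delete
another edge from `N`, preferably one meeting `Aᶜ`. Otherwise every edge of `N` meets `Aᶜ`: exchange
for `e` two edges of `N`, among them all those that meet `e`; this frees a vertex of `Aᶜ`.
-/

section Matchings

variable {V : Type*} {G : SimpleGraph V} {M N : Finset (Sym2 V)} {k : ℕ}

namespace IsMatching

theorem mono (hN : IsMatching G N) (hMN : M ⊆ N) : IsMatching G M :=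
  ⟨(Finset.coe_subset.2 hMN).trans hN.1, hN.2.mono (Finset.coe_subset.2 hMN)⟩

theorem eq_of_mem_of_mem (hM : IsMatching G M) {e f : Sym2 V} (he : e ∈ M) (hf : f ∈ M) {v : V}
    (hve : v ∈ e) (hvf : v ∈ f) : e = f :=
  hM.2.eq he hf fun hdisj => hdisj v hve hvf

theorem notMem_of_ne (hM : IsMatching G M) {e f : Sym2 V} (he : e ∈ M) (hf : f ∈ M) (hfe : f ≠ e)
    {v : V} (hve : v ∈ e) : v ∉ f :=
  fun hvf => hfe (hM.eq_of_mem_of_mem hf he hvf hve)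

theorem card_filter_mem_le_one [DecidableEq V] (hM : IsMatching G M) (v : V) :
    (M.filter (v ∈ ·)).card ≤ 1 := by
  refine Finset.card_le_one.2 fun e he f hf => ?_
  rw [Finset.mem_filter] at he hf
  exact hM.eq_of_mem_of_mem he.1 hf.1 he.2 hf.2

protected theorem insert [DecidableEq V] (hM : IsMatching G M) {e : Sym2 V} (he : e ∈ G.edgeSet)
    (hdisj : ∀ f ∈ M, ∀ v ∈ e, v ∉ f) : IsMatching G (insert e M) := by
  rw [IsMatching, Finset.coe_insert]
  refine ⟨Set.insert_subset he hM.1, ?_⟩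
  exact hM.2.insert fun f hf _ => ⟨hdisj f hf, fun v hvf hve => hdisj f hf v hve hvf⟩

end IsMatching

namespace IsKMatching

theorem exists_subset (hN : IsKMatching G N k) {m : ℕ} (hm : m ≤ k) :
    ∃ M ⊆ N, IsKMatching G M m := by
  obtain ⟨M, hMN, hM⟩ := Finset.exists_subset_card_eq (hm.trans_eq hN.2.symm)
  exact ⟨M, hMN, hN.1.mono hMN, hM⟩

protected theorem erase [DecidableEq V] (hN : IsKMatching G N (k + 1)) {e : Sym2 V} (he : e ∈ N) :
    IsKMatching G (N.erase e) k :=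
  ⟨hN.1.mono (N.erase_subset e), by rw [Finset.card_erase_of_mem he, hN.2, Nat.add_sub_cancel]⟩

theorem exists_subset_avoiding (S : Finset V) (hN : IsKMatching G N (k + S.card)) :
    ∃ M ⊆ N, IsKMatching G M k ∧ ∀ e ∈ M, ∀ v ∈ S, v ∉ e := by
  classical
  let touching := S.biUnion fun v => N.filter (v ∈ ·)
  have card_touching : touching.card ≤ S.card := by
    simpa using Finset.card_biUnion_le_card_mul S _ 1 fun v _ => hN.1.card_filter_mem_le_one v
  have le_card_rest : k ≤ (N \ touching).card := by
    have := Finset.le_card_sdiff touching N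
    have := hN.2
    lia
  obtain ⟨M, hM, hMk⟩ := Finset.exists_subset_card_eq le_card_rest
  refine ⟨M, hM.trans Finset.sdiff_subset, ⟨hN.1.mono (hM.trans Finset.sdiff_subset), hMk⟩, ?_⟩
  intro e he v hv hve
  obtain ⟨heN, he_touching⟩ := Finset.mem_sdiff.1 (hM he)
  exact he_touching (Finset.mem_biUnion.2 ⟨v, hv, Finset.mem_filter.2 ⟨heN, hve⟩⟩)

theorem exists_subset_insert [DecidableEq V] (hN : IsKMatching G N (k + 2)) {e : Sym2 V}
    (he : e ∈ G.edgeSet) :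
    ∃ M ⊆ N, M.card = k ∧ IsKMatching G (insert e M) (k + 1) := by
  have card_e : e.toFinset.card = 2 :=
    Sym2.card_toFinset_of_not_isDiag e (G.not_isDiag_of_mem_edgeSet he)
  obtain ⟨M, hMN, ⟨hM, hMk⟩, havoid⟩ := exists_subset_avoiding e.toFinset (card_e ▸ hN)
  simp only [Sym2.mem_toFinset] at havoid
  have heM : e ∉ M := fun h => havoid e h _ e.out_fst_mem e.out_fst_mem
  exact ⟨M, hMN, hMk, hM.insert he havoid, by rw [Finset.card_insert_of_notMem heM, hMk]⟩

variable {A : Set V}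

theorem exists_erase_avoiding_compl [DecidableEq V] (hN : IsKMatching G N (k + 2))
    (hA : Aᶜ.Nonempty) {e : Sym2 V} (heA : ∀ x ∈ e, x ∈ A) :
    ∃ f ∈ N, e ≠ f ∧ ∃ v ∈ Aᶜ, ∀ g ∈ N.erase f, v ∉ g := by
  by_cases hmeet : ∃ f ∈ N, ∃ v ∈ f, v ∉ A
  · obtain ⟨f, hf, v, hvf, hvA⟩ := hmeet
    refine ⟨f, hf, ?_, v, hvA, fun g hg => ?_⟩
    · rintro rfl
      exact hvA (heA v hvf)
    · obtain ⟨hgf, hgN⟩ := Finset.mem_erase.1 hg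
      exact hN.1.notMem_of_ne hf hgN hgf hvf
  · push Not at hmeet
    obtain ⟨v, hv⟩ := hA
    have one_lt_card : 1 < N.card := by rw [hN.2]; lia
    obtain ⟨f, hf, hfe⟩ := Finset.exists_mem_ne one_lt_card e
    exact ⟨f, hf, hfe.symm, v, hv, fun g hg hvg => hv (hmeet g (Finset.mem_of_mem_erase hg) v hvg)⟩

theorem exists_insert_avoiding_compl [DecidableEq V] (hN : IsKMatching G N (k + 2))
    (hmeet : ∀ f ∈ N, ∃ v ∈ f, v ∉ A) {e : Sym2 V} (he : e ∈ G.edgeSet) (heA : ∀ x ∈ e, x ∈ A) :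
    ∃ M, IsKMatching G (insert e M) (k + 1) ∧ ∃ v ∈ Aᶜ, ∀ g ∈ insert e M, v ∉ g := by
  obtain ⟨M, hMN, hMk, hM⟩ := hN.exists_subset_insert he
  have card_lt : M.card < N.card := by rw [hMk, hN.2]; lia
  obtain ⟨f, hf, hfM⟩ := Finset.exists_mem_notMem_of_card_lt_card card_lt
  obtain ⟨v, hvf, hvA⟩ := hmeet f hf
  refine ⟨M, hM, v, hvA, (Finset.forall_mem_insert _ _ _).2 ⟨fun hve => hvA (heA v hve), ?_⟩⟩
  exact fun g hg => hN.1.notMem_of_ne hf (hMN hg) (ne_of_mem_of_not_mem hg hfM) hvf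

theorem exists_avoiding_compl (hN : IsKMatching G N (k + 2)) (hA : Aᶜ.Nonempty)
    (hedge : ∃ e ∈ G.edgeSet, ∀ x ∈ e, x ∈ A) :
    ∃ M, IsKMatching G M (k + 1) ∧ (∃ e ∈ M, ∀ x ∈ e, x ∈ A) ∧ ∃ v ∈ Aᶜ, ∀ g ∈ M, v ∉ g := by
  classical
  by_cases hinside : ∃ e ∈ N, ∀ x ∈ e, x ∈ A
  · obtain ⟨e, heN, heA⟩ := hinside
    obtain ⟨f, hf, hef, v, hv⟩ := hN.exists_erase_avoiding_compl hA heA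
    exact ⟨N.erase f, hN.erase hf, ⟨e, Finset.mem_erase.2 ⟨hef, heN⟩, heA⟩, v, hv⟩
  · push Not at hinside
    obtain ⟨e, he, heA⟩ := hedge
    obtain ⟨M, hM, v, hv⟩ := hN.exists_insert_avoiding_compl hinside he heA
    exact ⟨insert e M, hM, ⟨e, Finset.mem_insert_self e M, heA⟩, v, hv⟩

end IsKMatching

theorem exists_isKMatching_of_le_matchNum (hk : k ≤ matchNum G) : ∃ M, IsKMatching G M k := by
  rcases k with _ | k
  · exact ⟨∅, ⟨by simp, by simp⟩, rfl⟩
  · obtain ⟨m, ⟨N, hN⟩, hkm⟩ := exists_lt_of_lt_csSup' (Nat.lt_of_succ_le hk)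
    obtain ⟨M, -, hM⟩ := hN.exists_subset hkm
    exact ⟨M, hM⟩

end Matchings

section Joins

variable {V : Type*} {G : SimpleGraph V}

theorem exists_isCompleteBetween_compl_of_not_preconnected_compl (h : ¬ Gᶜ.Preconnected) :
    ∃ A : Set V, A.Nonempty ∧ Aᶜ.Nonempty ∧ G.IsCompleteBetween A Aᶜ := by
  simp only [SimpleGraph.Preconnected, not_forall] at h
  obtain ⟨u, w, huw⟩ := h
  refine ⟨{x | Gᶜ.Reachable u x}, ⟨u, .refl u⟩, ⟨w, huw⟩, fun a ha b hb => ?_⟩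
  by_contra hab
  have hab' : Gᶜ.Adj a b := (G.compl_adj a b).2 ⟨ne_of_mem_of_not_mem ha hb, hab⟩
  exact hb (ha.trans hab'.reachable)

theorem adj_iff_of_isCompleteBetween_compl {A : Set V} (hcomplete : G.IsCompleteBetween A Aᶜ)
    (hA : ¬ ∃ e ∈ G.edgeSet, ∀ x ∈ e, x ∈ A) (hAc : ¬ ∃ e ∈ G.edgeSet, ∀ x ∈ e, x ∈ Aᶜ) (x y : V) :
    G.Adj x y ↔ (x ∈ A ∧ y ∉ A) ∨ (x ∉ A ∧ y ∈ A) := by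
  have not_both (hxy : G.Adj x y) : ¬ (x ∈ A ∧ y ∈ A) := fun h =>
    hA ⟨s(x, y), hxy, by simpa using h⟩
  have not_neither (hxy : G.Adj x y) : ¬ (x ∉ A ∧ y ∉ A) := fun h =>
    hAc ⟨s(x, y), hxy, by simpa using h⟩
  constructor
  · tauto
  · rintro (⟨hx, hy⟩ | ⟨hx, hy⟩)
    · exact hcomplete hx hy
    · exact (hcomplete hy hx).symm

theorem exists_isCompleteBetween_compl_and_edge_subset
    (hnotbip : ¬ ∃ A : Set V, ∀ x y, G.Adj x y ↔ (x ∈ A ∧ y ∉ A) ∨ (x ∉ A ∧ y ∈ A))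
    (hdisc : ¬ Gᶜ.Connected) :
    ∃ A : Set V, Aᶜ.Nonempty ∧ G.IsCompleteBetween A Aᶜ ∧ ∃ e ∈ G.edgeSet, ∀ x ∈ e, x ∈ A := by
  have hV : Nonempty V := by
    by_contra hV
    exact hnotbip ⟨∅, fun x => (hV ⟨x⟩).elim⟩
  obtain ⟨A, hA, hAc, hcomplete⟩ :=
    exists_isCompleteBetween_compl_of_not_preconnected_compl fun h => hdisc ⟨h⟩
  by_cases hedge : ∃ e ∈ G.edgeSet, ∀ x ∈ e, x ∈ A
  · exact ⟨A, hAc, hcomplete, hedge⟩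
  · refine ⟨Aᶜ, by rwa [compl_compl], by rw [compl_compl]; exact hcomplete.symm, ?_⟩
    by_contra hedge'
    exact hnotbip ⟨A, adj_iff_of_isCompleteBetween_compl hcomplete hedge hedge'⟩

end Joins

theorem exists_matching_and_vertex_general {V : Type*} (G : SimpleGraph V)
    (hnotbip : ¬ ∃ A : Set V, ∀ x y, G.Adj x y ↔ ((x ∈ A ∧ y ∉ A) ∨ (x ∉ A ∧ y ∈ A)))
    (hdisc : ¬ Gᶜ.Connected) (k : ℕ) (hk2 : 2 ≤ k) (hk : ∃ N, IsKMatching G N k) :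
    ∃ (A B : Set V) (M : Finset (Sym2 V)) (v : V),
      A ∪ B = Set.univ ∧ Disjoint A B ∧
      (∀ a ∈ A, ∀ b ∈ B, G.Adj a b) ∧
      IsKMatching G M (k - 1) ∧
      (∀ e ∈ M, v ∉ e) ∧
      (∃ e ∈ M, ∀ x, x ∈ e → x ∈ A) ∧
      v ∈ B := by
  obtain ⟨m, rfl⟩ := Nat.exists_eq_add_of_le' hk2
  obtain ⟨A, hAc, hcomplete, hedge⟩ := exists_isCompleteBetween_compl_and_edge_subset hnotbip hdisc
  obtain ⟨N, hN⟩ := hk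
  obtain ⟨M, hM, hMA, v, hvA, hvM⟩ := hN.exists_avoiding_compl hAc hedge
  exact ⟨A, Aᶜ, M, v, Set.union_compl_self A, disjoint_compl_right,
    fun a ha b hb => hcomplete ha hb, hM, hvM, hMA, hvA⟩

/-- Let `G` be a graph with no isolated vertices and `ν(G) ≥ 2`
which is not complete bipartite and whose complement is disconnected, and let
`2 ≤ k ≤ ν(G)`. Then there are induced subgraphs `G_1`, `G_2` on complementary
disjoint vertex sets `A`, `B` with all edges between `A` and `B` present, a
`(k−1)`-matching `M`, and a vertex `v` avoiding `M`, such that `M` has an edge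
inside `A` and `v ∈ B`. -/
theorem exists_matching_and_vertex {n : ℕ} (G : SimpleGraph (Fin n))
    (hiso : ∀ v : Fin n, ∃ w, G.Adj v w)
    (hnu : 2 ≤ matchNum G)
    (hnotbip : ¬ ∃ A : Set (Fin n), ∀ x y : Fin n,
      G.Adj x y ↔ ((x ∈ A ∧ y ∉ A) ∨ (x ∉ A ∧ y ∈ A)))
    (hdisc : ¬ (Gᶜ).Connected)
    (k : ℕ) (hk2 : 2 ≤ k) (hk : k ≤ matchNum G) :
    ∃ (A B : Set (Fin n)) (M : Finset (Sym2 (Fin n))) (v : Fin n),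
      A ∪ B = Set.univ ∧ Disjoint A B ∧
      (∀ a ∈ A, ∀ b ∈ B, G.Adj a b) ∧
      IsKMatching G M (k - 1) ∧
      (∀ e ∈ M, v ∉ e) ∧
      (∃ e ∈ M, ∀ x, x ∈ e → x ∈ A) ∧
      v ∈ B := by
  exact exists_matching_and_vertex_general G hnotbip hdisc k hk2
    (exists_isKMatching_of_le_matchNum hk)
end
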